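/- If f ∈ F_2[x] is a monic irreducible polynomial of type (C,n) with n > 1, then there exists a monic irreducible polynomial g of degree n over F_2 of type (B,n) such that g divides f^Q and g^Q is a monic irreducible polynomial of degree 2n of type (D,2n). -/

import Mathlib

open Polynomial

noncomputable def Qtrans (f : Polynomial (ZMod 2)) : Polynomial (ZMod 2) :=
  ∑ i ∈ Finset.range (f.natDegree + 1),
    C (f.coeff i) * X ^ (f.natDegree - i) * (X ^ 2 + 1) ^ i

/-!
Let `a` be a root of `f` and `K = 𝔽₂(a)`. The coefficients in the definition of the types are
traces: `Tr a = 1` and `Tr a⁻¹ = 0`. Substituting `y = a z` turns `y + y⁻¹ = a` into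
`z² - z = a⁻²`, which by additive Hilbert 90 is solvable in `K` exactly when `Tr a⁻¹ = 0`. Since
`Tr y + Tr y⁻¹ = 1`, we may exchange `y` and `y⁻¹` to get `Tr y = 0` and `Tr y⁻¹ = 1`, and `g` is
the minimal polynomial of `y`. By the same criterion `w + w⁻¹ = y` has no solution in `K`, so that
a root `w` of the Q-transform of `g` has degree `2n` and this Q-transform is irreducible.
-/

open IntermediateField Module

section Reverse

variable {R : Type*} [Semiring R]

theorem reflect_finsetSum {ι : Type*} (N : ℕ) (s : Finset ι) (p : ι → R[X]) :
    reflect N (∑ i ∈ s, p i) = ∑ i ∈ s, reflect N (p i) := by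
  ext k
  simp only [coeff_reflect, finsetSum_coeff]

theorem reflect_pow {N : ℕ} {p : R[X]} (hp : p.natDegree ≤ N) (k : ℕ) :
    reflect (k * N) (p ^ k) = reflect N p ^ k := by
  induction k with
  | zero => simp
  | succ k ih =>
    rw [Nat.succ_mul, pow_succ, reflect_mul _ _ (natDegree_pow_le_of_le k hp) hp, ih, pow_succ]

theorem nextCoeff_reverse {p : R[X]} (hp : p.coeff 0 ≠ 0) : p.reverse.nextCoeff = p.coeff 1 := by
  have hdeg : p.reverse.natDegree = p.natDegree := by
    rw [reverse_natDegree, natTrailingDegree_eq_zero.2 (Or.inr hp), Nat.sub_zero]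
  rw [← coeff_one_reverse, coeff_reverse, coeff_reverse, hdeg, revAt_invol]

end Reverse

section QTransform

theorem natDegree_X_sq_add_one_le {R : Type*} [Semiring R] :
    (X ^ 2 + 1 : R[X]).natDegree ≤ 2 := by
  compute_degree

theorem reflect_X_sq_add_one {R : Type*} [Semiring R] :
    reflect 2 (X ^ 2 + 1 : R[X]) = X ^ 2 + 1 := by
  rw [reflect_add, reflect_monomial, revAt_le le_rfl, reflect_one, Nat.sub_self, pow_zero, add_comm]

theorem coeff_one_X_sq_add_one_pow {R : Type*} [CommSemiring R] (n : ℕ) :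
    ((X ^ 2 + 1 : R[X]) ^ n).coeff 1 = 0 := by
  have : (X ^ 2 + 1 : R[X]) ^ n = expand R 2 ((X + 1) ^ n) := by simp
  rw [this, coeff_expand two_pos, if_neg (by decide)]

variable (f : (ZMod 2)[X])

theorem aeval_Qtrans {L : Type*} [Field L] [Algebra (ZMod 2) L] {w : L} (hw : w ≠ 0) :
    aeval w (Qtrans f) = w ^ f.natDegree * aeval (w + w⁻¹) f := by
  rw [Qtrans, map_sum, aeval_eq_sum_range, Finset.mul_sum]
  refine Finset.sum_congr rfl fun i hi => ?_
  have hin : i ≤ f.natDegree := Nat.lt_succ_iff.1 (Finset.mem_range.1 hi)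
  have hsq : w ^ 2 + 1 = w * (w + w⁻¹) := by field_simp
  calc aeval w (C (f.coeff i) * X ^ (f.natDegree - i) * (X ^ 2 + 1) ^ i)
      = algebraMap (ZMod 2) L (f.coeff i) * w ^ (f.natDegree - i) * (w * (w + w⁻¹)) ^ i := by
        simp [hsq]
    _ = w ^ (f.natDegree - i + i) * (algebraMap (ZMod 2) L (f.coeff i) * (w + w⁻¹) ^ i) := by
        rw [mul_pow, pow_add]
        ring
    _ = w ^ f.natDegree * f.coeff i • (w + w⁻¹) ^ i := by
        rw [Nat.sub_add_cancel hin, Algebra.smul_def]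

theorem coeff_zero_Qtrans : (Qtrans f).coeff 0 = f.leadingCoeff := by
  rw [Qtrans, finsetSum_coeff, Finset.sum_range_succ, Finset.sum_eq_zero, zero_add]
  · simp [coeff_zero_eq_eval_zero]
  · intro i hi
    have : f.natDegree - i ≠ 0 := (Nat.sub_pos_of_lt (Finset.mem_range.1 hi)).ne'
    simp [coeff_zero_eq_eval_zero, this]

theorem coeff_one_Qtrans : (Qtrans f).coeff 1 = f.nextCoeff := by
  rcases Nat.eq_zero_or_pos f.natDegree with hn | hn
  · simp [Qtrans, nextCoeff, hn]
  obtain ⟨m, hm⟩ := Nat.exists_eq_add_one.2 hn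
  rw [nextCoeff_of_natDegree_pos hn, Qtrans, hm, finsetSum_coeff, Finset.sum_range_succ,
    Finset.sum_range_succ, Finset.sum_eq_zero, zero_add]
  · simp [mul_assoc, coeff_one_X_sq_add_one_pow, coeff_zero_eq_eval_zero]
  · intro i hi
    have hpow : ¬m + 1 - i ≤ 1 := by
      have := Finset.mem_range.1 hi
      omega
    rw [mul_assoc, coeff_C_mul, coeff_X_pow_mul', if_neg hpow, mul_zero]

theorem reflect_Qtrans : reflect (2 * f.natDegree) (Qtrans f) = Qtrans f := by
  rw [Qtrans, reflect_finsetSum]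
  refine Finset.sum_congr rfl fun i hi => ?_
  have hin : i ≤ f.natDegree := Nat.lt_succ_iff.1 (Finset.mem_range.1 hi)
  have hsplit : 2 * f.natDegree = 2 * (f.natDegree - i) + i * 2 := by omega
  have hmiddle : revAt (2 * (f.natDegree - i)) (f.natDegree - i) = f.natDegree - i := by
    rw [revAt_le (by omega)]
    omega
  rw [hsplit, reflect_mul _ _ ((natDegree_C_mul_X_pow_le _ _).trans (by omega))
    (natDegree_pow_le_of_le i natDegree_X_sq_add_one_le), reflect_C_mul_X_pow, hmiddle,
    reflect_pow natDegree_X_sq_add_one_le, reflect_X_sq_add_one]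

theorem coeff_Qtrans_sub {k : ℕ} (hk : k ≤ 2 * f.natDegree) :
    (Qtrans f).coeff (2 * f.natDegree - k) = (Qtrans f).coeff k := by
  rw [← revAt_le hk, ← coeff_reflect, reflect_Qtrans]

theorem natDegree_Qtrans : (Qtrans f).natDegree = 2 * f.natDegree := by
  refine le_antisymm (natDegree_sum_le_of_forall_le _ _ fun i hi => ?_) ?_
  · refine (natDegree_mul_le_of_le (natDegree_C_mul_X_pow_le _ _)
      (natDegree_pow_le_of_le i natDegree_X_sq_add_one_le)).trans ?_
    have := Finset.mem_range.1 hi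
    omega
  · rcases eq_or_ne f 0 with rfl | hf
    · simp
    refine le_natDegree_of_ne_zero ?_
    rw [← Nat.sub_zero (2 * _), coeff_Qtrans_sub f (Nat.zero_le _), coeff_zero_Qtrans]
    exact leadingCoeff_ne_zero.2 hf

theorem leadingCoeff_Qtrans : (Qtrans f).leadingCoeff = f.leadingCoeff := by
  rw [leadingCoeff, natDegree_Qtrans, ← Nat.sub_zero (2 * _), coeff_Qtrans_sub f (Nat.zero_le _),
    coeff_zero_Qtrans]

theorem nextCoeff_Qtrans : (Qtrans f).nextCoeff = f.nextCoeff := by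
  rcases Nat.eq_zero_or_pos f.natDegree with hn | hn
  · simp [nextCoeff, natDegree_Qtrans, hn]
  · rw [nextCoeff_of_natDegree_pos (by rw [natDegree_Qtrans]; omega), natDegree_Qtrans,
      coeff_Qtrans_sub f (by omega), coeff_one_Qtrans]

variable {f} in
theorem monic_Qtrans (hf : f.Monic) : (Qtrans f).Monic :=
  (leadingCoeff_Qtrans f).trans hf

end QTransform

section SimpleExtension

variable {F L : Type*} [Field F] [Field L] [Algebra F L]

theorem adjoin_simple_inv (x : L) : F⟮x⁻¹⟯ = F⟮x⟯ := by
  refine le_antisymm (adjoin_simple_le_iff.2 (inv_mem (mem_adjoin_simple_self F x)))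
    (adjoin_simple_le_iff.2 ?_)
  simpa only [inv_inv] using inv_mem (mem_adjoin_simple_self F x⁻¹)

theorem adjoin_add_inv_le (x : L) : F⟮x + x⁻¹⟯ ≤ F⟮x⟯ :=
  adjoin_simple_le_iff.2 <|
    add_mem (mem_adjoin_simple_self F x) (inv_mem (mem_adjoin_simple_self F x))

theorem minpoly_inv {x : L} (hint : IsIntegral F x) (hx : x ≠ 0) :
    minpoly F x⁻¹ = C ((minpoly F x).coeff 0)⁻¹ * (minpoly F x).reverse := by
  set p := minpoly F x
  have hp₀ : p.coeff 0 ≠ 0 := minpoly.coeff_zero_ne_zero hint hx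
  have hroot : aeval x⁻¹ p.reverse = 0 := by
    let _ : Invertible x := invertibleOfNonzero hx
    rw [← invOf_eq_inv]
    exact (eval₂_reverse_eq_zero_iff (algebraMap F L) x p).2 (minpoly.aeval F x)
  have hmonic : (C (p.coeff 0)⁻¹ * p.reverse).Monic := by
    refine monic_C_mul_of_mul_leadingCoeff_eq_one ?_
    rw [reverse_leadingCoeff, trailingCoeff, natTrailingDegree_eq_zero.2 (Or.inr hp₀),
      inv_mul_cancel₀ hp₀]
  have hdeg : (minpoly F x⁻¹).natDegree = p.natDegree := by
    rw [← adjoin.finrank hint.inv, adjoin_simple_inv, adjoin.finrank hint]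
  refine (eq_of_monic_of_dvd_of_natDegree_le (minpoly.monic hint.inv) hmonic
    (minpoly.dvd F x⁻¹ (by rw [map_mul, hroot, mul_zero])) ?_).symm
  rw [hdeg, natDegree_C_mul (inv_ne_zero hp₀)]
  exact p.reverse_natDegree_le

theorem two_mul_finrank_le_of_lt {E₁ E₂ : IntermediateField F L} [FiniteDimensional F E₂]
    (h : E₁ < E₂) : 2 * finrank F E₁ ≤ finrank F E₂ := by
  obtain ⟨k, hk⟩ := finrank_dvd_of_le_right h.le
  have hpos : 0 < finrank F E₂ := finrank_pos
  have hk₀ : k ≠ 0 := by rintro rfl; omega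
  have hk₁ : k ≠ 1 := by
    rintro rfl
    exact h.ne (eq_of_le_of_finrank_eq h.le (by rw [hk, mul_one]))
  rw [hk, mul_comm]
  exact Nat.mul_le_mul_left _ (by omega)

variable [FiniteDimensional F L]

theorem trace_eq_neg_nextCoeff_minpoly {x : L} (hx : F⟮x⟯ = ⊤) :
    Algebra.trace F L x = -(minpoly F x).nextCoeff := by
  rw [trace_eq_finrank_mul_minpoly_nextCoeff, hx, IntermediateField.finrank_top, Nat.cast_one,
    one_mul]

theorem trace_inv_eq_neg_coeff_one_div_coeff_zero {x : L} (hx : F⟮x⟯ = ⊤) (hx₀ : x ≠ 0) :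
    Algebra.trace F L x⁻¹ = -((minpoly F x).coeff 1 / (minpoly F x).coeff 0) := by
  have hint : IsIntegral F x := .of_finite F x
  rw [trace_eq_neg_nextCoeff_minpoly (by rwa [adjoin_simple_inv]), minpoly_inv hint hx₀,
    nextCoeff_C_mul, nextCoeff_reverse (minpoly.coeff_zero_ne_zero hint hx₀), inv_mul_eq_div]

end SimpleExtension

section HilbertNinety

variable {F K : Type*} [Field F] [Field K] [Algebra F K] [FiniteDimensional F K]
  [IsGalois F K] {σ : Gal(K/F)}

theorem mem_range_algebraMap_of_apply_eq (hσ : Subgroup.zpowers σ = ⊤) {z : K} (hz : σ z = z) :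
    z ∈ Set.range (algebraMap F K) := by
  have hstab : Subgroup.zpowers σ ≤ MulAction.stabilizer Gal(K/F) z := by
    rwa [Subgroup.zpowers_le]
  rw [IsGalois.mem_range_algebraMap_iff_fixed]
  exact fun τ => hstab (hσ ▸ Subgroup.mem_top τ)

/-- Additive Hilbert 90. The range of `σ - 1` lies in the kernel of the trace and has the same
dimension, because the kernel of `σ - 1` is `F`. -/
theorem exists_apply_sub_self_eq_iff_trace_eq_zero (hσ : Subgroup.zpowers σ = ⊤) {c : K} :
    (∃ z, σ z - z = c) ↔ Algebra.trace F K c = 0 := by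
  let δ : K →ₗ[F] K := σ.toLinearMap - LinearMap.id
  have hle : LinearMap.range δ ≤ LinearMap.ker (Algebra.trace F K) := by
    rintro _ ⟨z, rfl⟩
    simp [δ, Algebra.trace_eq_of_algEquiv σ z]
  have hker : LinearMap.ker δ ≤ Submodule.span F {1} := by
    intro z hz
    obtain ⟨r, rfl⟩ := mem_range_algebraMap_of_apply_eq hσ (sub_eq_zero.1 hz)
    exact Submodule.mem_span_singleton.2 ⟨r, (Algebra.algebraMap_eq_smul_one r).symm⟩
  have hker_finrank : finrank F (LinearMap.ker δ) ≤ 1 :=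
    (Submodule.finrank_mono hker).trans (finrank_span_singleton one_ne_zero).le
  have hδ := δ.finrank_range_add_finrank_ker
  have htrace := (Algebra.trace F K).finrank_range_add_finrank_ker
  rw [LinearMap.range_eq_top.2 (Algebra.trace_surjective F K), finrank_top, finrank_self]
    at htrace
  rw [← LinearMap.mem_ker, ← Submodule.eq_of_le_of_finrank_le hle (by omega)]
  rfl

end HilbertNinety

section FiniteField

variable {F K : Type*} [Field F] [Fintype F] [Field K] [Algebra F K]

theorem trace_pow_card [Algebra.IsAlgebraic F K] (c : K) :
    Algebra.trace F K (c ^ Fintype.card F) = Algebra.trace F K c :=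
  Algebra.trace_eq_of_algEquiv (FiniteField.frobeniusAlgEquivOfAlgebraic F K) c

variable (F K) in
theorem zpowers_frobeniusAlgEquivOfAlgebraic [Finite K] :
    Subgroup.zpowers (FiniteField.frobeniusAlgEquivOfAlgebraic F K) = ⊤ := by
  refine (Subgroup.eq_top_iff' _).2 fun τ => ?_
  obtain ⟨k, rfl⟩ := (FiniteField.bijective_frobeniusAlgEquivOfAlgebraic_pow F K).2 τ
  exact Subgroup.npow_mem_zpowers _ _

theorem exists_pow_card_sub_self_eq_iff_trace_eq_zero [FiniteDimensional F K] {c : K} :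
    (∃ z, z ^ Fintype.card F - z = c) ↔ Algebra.trace F K c = 0 := by
  have : Finite K := Module.finite_of_finite F
  exact exists_apply_sub_self_eq_iff_trace_eq_zero (zpowers_frobeniusAlgEquivOfAlgebraic F K)

end FiniteField

section CharTwo

theorem add_inv_eq_iff_div_sq_sub_div {K : Type*} [Field K] [CharP K 2] {a y : K} (ha : a ≠ 0) :
    y + y⁻¹ = a ↔ (y / a) ^ 2 - y / a = a⁻¹ ^ 2 := by
  rcases eq_or_ne y 0 with rfl | hy
  · simp [ha.symm, (pow_ne_zero 2 ha).symm]
  have hfactor : (y / a) ^ 2 - y / a - a⁻¹ ^ 2 = (y + y⁻¹ - a) * (y * a⁻¹ ^ 2) := by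
    simp only [CharTwo.sub_eq_add]
    field_simp
    ring
  have hunit : y * a⁻¹ ^ 2 ≠ 0 := mul_ne_zero hy (pow_ne_zero 2 (inv_ne_zero ha))
  rw [← sub_eq_zero, ← sub_eq_zero (b := a⁻¹ ^ 2), hfactor, mul_eq_zero, or_iff_left hunit]

variable {K : Type*} [Field K] [Algebra (ZMod 2) K] [FiniteDimensional (ZMod 2) K]

theorem trace_eq_nextCoeff_minpoly {x : K} (hx : (ZMod 2)⟮x⟯ = ⊤) :
    Algebra.trace (ZMod 2) K x = (minpoly (ZMod 2) x).nextCoeff := by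
  rw [trace_eq_neg_nextCoeff_minpoly hx, CharTwo.neg_eq]

theorem trace_inv_eq_coeff_one_minpoly {x : K} (hx : (ZMod 2)⟮x⟯ = ⊤) (hx₀ : x ≠ 0) :
    Algebra.trace (ZMod 2) K x⁻¹ = (minpoly (ZMod 2) x).coeff 1 := by
  have hne : (minpoly (ZMod 2) x).coeff 0 ≠ 0 :=
    minpoly.coeff_zero_ne_zero (.of_finite (ZMod 2) x) hx₀
  have hcoeff : (minpoly (ZMod 2) x).coeff 0 = 1 := Fin.eq_one_of_ne_zero _ hne
  rw [trace_inv_eq_neg_coeff_one_div_coeff_zero hx hx₀, CharTwo.neg_eq, hcoeff, div_one]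

theorem exists_add_inv_eq_iff_trace_inv_eq_zero {a : K} (ha : a ≠ 0) :
    (∃ y, y + y⁻¹ = a) ↔ Algebra.trace (ZMod 2) K a⁻¹ = 0 := by
  have : CharP K 2 := charP_of_injective_algebraMap' (ZMod 2) 2
  rw [← trace_pow_card, ← exists_pow_card_sub_self_eq_iff_trace_eq_zero, ZMod.card]
  simp_rw [add_inv_eq_iff_div_sq_sub_div ha]
  exact (Equiv.divRight₀ a ha).exists_congr_left.trans (by simp [ha])

theorem exists_add_inv_eq_of_trace {a : K} (htr : Algebra.trace (ZMod 2) K a = 1)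
    (htr_inv : Algebra.trace (ZMod 2) K a⁻¹ = 0) :
    ∃ y, y + y⁻¹ = a ∧ Algebra.trace (ZMod 2) K y = 0 ∧ Algebra.trace (ZMod 2) K y⁻¹ = 1 := by
  have ha : a ≠ 0 := by
    rintro rfl
    simp at htr
  obtain ⟨y, rfl⟩ := (exists_add_inv_eq_iff_trace_inv_eq_zero ha).2 htr_inv
  rw [map_add] at htr
  have hcases : ∀ s t : ZMod 2, s + t = 1 → (s = 0 ∧ t = 1) ∨ (t = 0 ∧ s = 1) := by decide
  rcases hcases _ _ htr with h | h
  · exact ⟨y, rfl, h⟩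
  · exact ⟨y⁻¹, by rw [inv_inv, add_comm], by rwa [inv_inv]⟩

theorem exists_adjoin_eq_top_and_add_inv_eq {a : K} (ha : (ZMod 2)⟮a⟯ = ⊤)
    (hnext : (minpoly (ZMod 2) a).nextCoeff = 1) (hone : (minpoly (ZMod 2) a).coeff 1 = 0) :
    ∃ y : K, (ZMod 2)⟮y⟯ = ⊤ ∧ y ≠ 0 ∧ y + y⁻¹ = a ∧
      (minpoly (ZMod 2) y).nextCoeff = 0 ∧ (minpoly (ZMod 2) y).coeff 1 = 1 := by
  have ha₀ : a ≠ 0 := by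
    rintro rfl
    simp at hone
  rw [← trace_eq_nextCoeff_minpoly ha] at hnext
  rw [← trace_inv_eq_coeff_one_minpoly ha ha₀] at hone
  obtain ⟨y, rfl, hy_trace, hy_trace_inv⟩ := exists_add_inv_eq_of_trace hnext hone
  have hy : (ZMod 2)⟮y⟯ = ⊤ := top_le_iff.1 (ha ▸ adjoin_add_inv_le y)
  have hy₀ : y ≠ 0 := by
    rintro rfl
    simp at ha₀
  exact ⟨y, hy, hy₀, rfl, trace_eq_nextCoeff_minpoly hy ▸ hy_trace,
    trace_inv_eq_coeff_one_minpoly hy hy₀ ▸ hy_trace_inv⟩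

theorem exists_irreducible_dvd_Qtrans {f : (ZMod 2)[X]} (hmonic : f.Monic) (hirr : Irreducible f)
    (hnext : f.nextCoeff = 1) (hone : f.coeff 1 = 0) :
    ∃ g : (ZMod 2)[X], g.Monic ∧ Irreducible g ∧ g.natDegree = f.natDegree ∧
      g.nextCoeff = 0 ∧ g.coeff 1 = 1 ∧ g.coeff 0 ≠ 0 ∧ g ∣ Qtrans f := by
  have : Fact (Irreducible f) := ⟨hirr⟩
  have : FiniteDimensional (ZMod 2) (AdjoinRoot f) := (AdjoinRoot.powerBasis hirr.ne_zero).finite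
  have hroot : (ZMod 2)⟮AdjoinRoot.root f⟯ = ⊤ := adjoin_root_eq_top f
  have hminpoly : minpoly (ZMod 2) (AdjoinRoot.root f) = f := by
    rw [AdjoinRoot.minpoly_root hirr.ne_zero, hmonic.leadingCoeff, inv_one, C_1, mul_one]
  obtain ⟨y, hy, hy₀, hadd, hnext_y, hone_y⟩ :=
    exists_adjoin_eq_top_and_add_inv_eq hroot (by rwa [hminpoly]) (by rwa [hminpoly])
  have hint : IsIntegral (ZMod 2) y := .of_finite _ y
  refine ⟨minpoly (ZMod 2) y, minpoly.monic hint, minpoly.irreducible hint, ?_, hnext_y, hone_y,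
    minpoly.coeff_zero_ne_zero hint hy₀, minpoly.dvd _ _ ?_⟩
  · rw [(Field.primitive_element_iff_minpoly_natDegree_eq _ y).1 hy,
      ← (Field.primitive_element_iff_minpoly_natDegree_eq _ _).1 hroot, hminpoly]
  · rw [aeval_Qtrans f hy₀, hadd, AdjoinRoot.aeval_eq, AdjoinRoot.mk_self, mul_zero]

theorem notMem_adjoin_add_inv {L : Type*} [Field L] [Algebra (ZMod 2) L] {w : L}
    (hy : w + w⁻¹ ≠ 0) (hcoeff : (minpoly (ZMod 2) (w + w⁻¹)).coeff 1 ≠ 0) :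
    w ∉ (ZMod 2)⟮w + w⁻¹⟯ := by
  intro hw
  have hint : IsIntegral (ZMod 2) (w + w⁻¹) := by
    rw [← minpoly.ne_zero_iff]
    intro h
    simp [h] at hcoeff
  have : FiniteDimensional (ZMod 2) (ZMod 2)⟮w + w⁻¹⟯ := adjoin.finiteDimensional hint
  set y := AdjoinSimple.gen (ZMod 2) (w + w⁻¹)
  have hminpoly : minpoly (ZMod 2) y = minpoly (ZMod 2) (w + w⁻¹) := minpoly_gen _ _
  have hy_top : (ZMod 2)⟮y⟯ = ⊤ := by
    rw [Field.primitive_element_iff_minpoly_natDegree_eq, hminpoly, adjoin.finrank hint]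
  have hy₀ : y ≠ 0 := fun h => hy (congrArg Subtype.val h)
  have htrace : Algebra.trace (ZMod 2) _ y⁻¹ = 0 :=
    (exists_add_inv_eq_iff_trace_inv_eq_zero hy₀).1 ⟨⟨w, hw⟩, Subtype.ext rfl⟩
  rw [trace_inv_eq_neg_coeff_one_div_coeff_zero hy_top hy₀, hminpoly, neg_eq_zero] at htrace
  exact div_ne_zero hcoeff (minpoly.coeff_zero_ne_zero hint hy) htrace

theorem irreducible_Qtrans {g : (ZMod 2)[X]} (hmonic : g.Monic) (hirr : Irreducible g)
    (h₀ : g.coeff 0 ≠ 0) (h₁ : g.coeff 1 ≠ 0) : Irreducible (Qtrans g) := by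
  have hdeg : (Qtrans g).degree ≠ 0 := by
    refine (natDegree_pos_iff_degree_pos.1 ?_).ne'
    rw [natDegree_Qtrans]
    exact Nat.mul_pos two_pos hirr.natDegree_pos
  obtain ⟨w, hw⟩ := IsAlgClosed.exists_aeval_eq_zero (AlgebraicClosure (ZMod 2)) _ hdeg
  have hw₀ : w ≠ 0 := by
    rintro rfl
    simp [← coeff_zero_eq_aeval_zero', coeff_zero_Qtrans, hmonic.leadingCoeff] at hw
  have hroot : aeval (w + w⁻¹) g = 0 := by
    rw [aeval_Qtrans g hw₀] at hw
    exact (mul_eq_zero.1 hw).resolve_left (pow_ne_zero _ hw₀)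
  have hminpoly : minpoly (ZMod 2) (w + w⁻¹) = g :=
    (minpoly.eq_of_irreducible_of_monic hirr hroot hmonic).symm
  have hy₀ : w + w⁻¹ ≠ 0 := by
    intro h
    rw [h, ← coeff_zero_eq_aeval_zero'] at hroot
    simp [h₀] at hroot
  have hint : IsIntegral (ZMod 2) w := Algebra.IsIntegral.isIntegral w
  have : FiniteDimensional (ZMod 2) (ZMod 2)⟮w⟯ := adjoin.finiteDimensional hint
  have hlt : (ZMod 2)⟮w + w⁻¹⟯ < (ZMod 2)⟮w⟯ :=
    (adjoin_add_inv_le w).lt_of_not_ge fun h =>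
      notMem_adjoin_add_inv hy₀ (by rwa [hminpoly]) (h (mem_adjoin_simple_self _ w))
  have hle : (Qtrans g).natDegree ≤ (minpoly (ZMod 2) w).natDegree := by
    have := two_mul_finrank_le_of_lt hlt
    rwa [adjoin.finrank (Algebra.IsIntegral.isIntegral _), adjoin.finrank hint, hminpoly,
      ← natDegree_Qtrans] at this
  rw [eq_of_monic_of_dvd_of_natDegree_le (minpoly.monic hint) (monic_Qtrans hmonic)
    (minpoly.dvd _ w hw) hle]
  exact minpoly.irreducible hint

end CharTwo

theorem stmt_4 (n : ℕ) (hn : 1 < n) (f : Polynomial (ZMod 2))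
    (hmon : f.Monic) (hirr : Irreducible f) (hdeg : f.natDegree = n)
    (hC : f.coeff (n - 1) = 1 ∧ f.coeff 1 = 0) :
    ∃ g : Polynomial (ZMod 2),
      g.Monic ∧ Irreducible g ∧ g.natDegree = n ∧
      (g.coeff (n - 1) = 0 ∧ g.coeff 1 = 1) ∧
      g ∣ Qtrans f ∧
      (Qtrans g).Monic ∧ Irreducible (Qtrans g) ∧ (Qtrans g).natDegree = 2 * n ∧
      (Qtrans g).coeff (2 * n - 1) = 0 ∧ (Qtrans g).coeff 1 = 0 := by
  subst hdeg
  have hnext : f.nextCoeff = 1 := by rw [nextCoeff_of_natDegree_pos (by omega), hC.1]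
  obtain ⟨g, hmonic_g, hirr_g, hdeg_g, hnext_g, hone_g, hzero_g, hdvd⟩ :=
    exists_irreducible_dvd_Qtrans hmon hirr hnext hC.2
  have hdeg_Q : (Qtrans g).natDegree = 2 * f.natDegree := by rw [natDegree_Qtrans, hdeg_g]
  refine ⟨g, hmonic_g, hirr_g, hdeg_g, ⟨?_, hone_g⟩, hdvd, monic_Qtrans hmonic_g,
    irreducible_Qtrans hmonic_g hirr_g hzero_g (hone_g ▸ one_ne_zero), hdeg_Q, ?_, ?_⟩
  · rw [← hdeg_g, ← nextCoeff_of_natDegree_pos (by omega), hnext_g]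
  · rw [← hdeg_Q, ← nextCoeff_of_natDegree_pos (by omega), nextCoeff_Qtrans, hnext_g]
  · rw [coeff_one_Qtrans, hnext_g]
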